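/- Let n ≥ 1, p ∈ ℝ^{2n}, and let H, A be 2n×2n real matrices and h₀, h₁ ≥ 0 with ‖H‖ ≤ h₀ and ‖A‖ ≤ 2‖p‖·h₁ (operator norms). Then for every X ∈ ℝ^{2n}: Q(J_st + H, 2·I_{2n}, A, X) ≥ ‖X‖²·(4 − 4h₀ − 4‖p‖(1 + h₀)·h₁). (This is the lower bound L^J_p(‖z‖²)(X) ≥ ‖X‖²(4 − 4‖H(p)‖₀ − 4‖p‖(1 + ‖H(p)‖₀)‖H(p)‖₁) for the Levi form of the squared norm with respect to J = J_st + H, since for u(z) = ‖z‖² one has Hessian 2I, ‖∇u(p)‖ = 2‖p‖ and ‖A‖ ≤ ‖∇u(p)‖·‖H(p)‖₁.) -/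

import Mathlib

open Matrix

/-- The Euclidean norm of a real vector. -/
noncomputable def evnorm {m : Type*} [Fintype m] (x : m → ℝ) : ℝ :=
  Real.sqrt (∑ i, x i ^ 2)

/-- The operator norm of a real matrix with respect to the Euclidean norm. -/
noncomputable def opnorm {m : Type*} [Fintype m] [DecidableEq m]
    (M : Matrix m m ℝ) : ℝ :=
  ‖Matrix.toEuclideanCLM (𝕜 := ℝ) M‖

/-- The coordinate expression of the Levi form:
`Q(J,D,A,X) = XᵀDX + (JX)ᵀD(JX) + Xᵀ(A − Aᵀ)(JX)`. -/
noncomputable def LeviQ {m : Type*} [Fintype m] (J D A : Matrix m m ℝ) (X : m → ℝ) : ℝ :=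
  X ⬝ᵥ D.mulVec X + (J.mulVec X) ⬝ᵥ D.mulVec (J.mulVec X)
    + X ⬝ᵥ ((A - Aᵀ).mulVec (J.mulVec X))

/-- The standard complex structure `J_st = [[0, −Iₙ],[Iₙ, 0]]` on `ℝ^{2n} = ℝⁿ ⊕ ℝⁿ`. -/
def Jstd (n : ℕ) : Matrix (Fin n ⊕ Fin n) (Fin n ⊕ Fin n) ℝ :=
  Matrix.fromBlocks 0 (-1) 1 0

theorem evnorm_eq_norm {m : Type*} [Fintype m] (x : m → ℝ) :
    evnorm x = ‖(WithLp.toLp 2 x : EuclideanSpace ℝ m)‖ := by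
  simp [evnorm, EuclideanSpace.norm_eq]

theorem evnorm_nonneg' {m : Type*} [Fintype m] (x : m → ℝ) : 0 ≤ evnorm x :=
  Real.sqrt_nonneg _

theorem evnorm_sq' {m : Type*} [Fintype m] (x : m → ℝ) : evnorm x ^ 2 = x ⬝ᵥ x := by
  unfold evnorm
  rw [Real.sq_sqrt (Finset.sum_nonneg fun i _ => sq_nonneg _)]
  simp [dotProduct, sq]

theorem evnorm_mulVec_le {m : Type*} [Fintype m] [DecidableEq m]
    (M : Matrix m m ℝ) (x : m → ℝ) : evnorm (M.mulVec x) ≤ opnorm M * evnorm x := by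
  rw [evnorm_eq_norm, evnorm_eq_norm]
  have h := (Matrix.toEuclideanCLM (𝕜 := ℝ) M).le_opNorm (WithLp.toLp 2 x)
  simpa [opnorm] using h

theorem evnorm_add_le {m : Type*} [Fintype m] (x y : m → ℝ) :
    evnorm (x + y) ≤ evnorm x + evnorm y := by
  simp only [evnorm_eq_norm, WithLp.toLp_add]
  exact norm_add_le _ _

theorem abs_dot_le {m : Type*} [Fintype m] (x y : m → ℝ) :
    |x ⬝ᵥ y| ≤ evnorm x * evnorm y := by
  refine abs_le_of_sq_le_sq ?_ (mul_nonneg (evnorm_nonneg' x) (evnorm_nonneg' y))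
  rw [mul_pow]
  unfold evnorm
  rw [Real.sq_sqrt (Finset.sum_nonneg fun i _ => sq_nonneg _),
    Real.sq_sqrt (Finset.sum_nonneg fun i _ => sq_nonneg _)]
  exact Finset.sum_mul_sq_le_sq_mul_sq _ _ _

theorem evnorm_Jstd {n : ℕ} (X : (Fin n ⊕ Fin n) → ℝ) :
    evnorm ((Jstd n).mulVec X) = evnorm X := by
  unfold evnorm Jstd
  congr 1
  simp [Fintype.sum_sum_type, Matrix.fromBlocks_mulVec, Matrix.neg_mulVec, add_comm]

/-- For `p ∈ ℝ^{2n}`, matrices `H, A` and `h₀, h₁ ≥ 0` with `‖H‖ ≤ h₀`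
and `‖A‖ ≤ 2‖p‖h₁`, the Levi expression of `u = ‖z‖²` (whose Hessian is `2I`) satisfies
`Q(J_st + H, 2I, A, X) ≥ ‖X‖²(4 − 4h₀ − 4‖p‖(1 + h₀)h₁)`. -/
theorem stmt17 {n : ℕ} (hn : 1 ≤ n) (p : (Fin n ⊕ Fin n) → ℝ)
    (H A : Matrix (Fin n ⊕ Fin n) (Fin n ⊕ Fin n) ℝ) (h₀ h₁ : ℝ)
    (hh₀ : 0 ≤ h₀) (hh₁ : 0 ≤ h₁) (hH : opnorm H ≤ h₀)
    (hA : opnorm A ≤ 2 * evnorm p * h₁) (X : (Fin n ⊕ Fin n) → ℝ) :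
    evnorm X ^ 2 * (4 - 4 * h₀ - 4 * evnorm p * (1 + h₀) * h₁) ≤
      LeviQ (Jstd n + H) ((2 : ℝ) • (1 : Matrix (Fin n ⊕ Fin n) (Fin n ⊕ Fin n) ℝ)) A X := by
  have hx := evnorm_nonneg' X
  have hp := evnorm_nonneg' p
  have hHX : evnorm (H.mulVec X) ≤ h₀ * evnorm X :=
    (evnorm_mulVec_le H X).trans (mul_le_mul_of_nonneg_right hH hx)
  have hJ := evnorm_Jstd X
  have hY : (Jstd n + H).mulVec X = (Jstd n).mulVec X + H.mulVec X := Matrix.add_mulVec _ _ _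
  have hYn : evnorm ((Jstd n + H).mulVec X) ≤ (1 + h₀) * evnorm X := by
    rw [hY]
    refine (evnorm_add_le _ _).trans ?_
    rw [hJ]
    linarith
  have hYsq : evnorm X ^ 2 - 2 * (h₀ * evnorm X ^ 2) ≤
      (Jstd n + H).mulVec X ⬝ᵥ (Jstd n + H).mulVec X := by
    rw [hY, add_dotProduct, dotProduct_add, dotProduct_add, ← evnorm_sq', ← evnorm_sq', hJ,
      dotProduct_comm (H.mulVec X) ((Jstd n).mulVec X)]
    have h1 := (abs_le.mp (abs_dot_le ((Jstd n).mulVec X) (H.mulVec X))).1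
    rw [hJ] at h1
    have h2 := mul_le_mul_of_nonneg_left hHX hx
    nlinarith [sq_nonneg (evnorm (H.mulVec X))]
  unfold LeviQ
  generalize (Jstd n + H).mulVec X = Y at hYn hYsq ⊢
  have hy := evnorm_nonneg' Y
  have ha : 0 ≤ 2 * evnorm p * h₁ := by positivity
  have e : X ⬝ᵥ ((A - Aᵀ).mulVec Y) = X ⬝ᵥ A.mulVec Y - A.mulVec X ⬝ᵥ Y := by
    rw [Matrix.sub_mulVec, dotProduct_sub, Matrix.mulVec_transpose, dotProduct_comm X (Y ᵥ* A),
      ← Matrix.dotProduct_mulVec, dotProduct_comm Y]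
  have hxy : evnorm X * evnorm Y ≤ (1 + h₀) * evnorm X ^ 2 := by
    nlinarith
  have b1 : |X ⬝ᵥ A.mulVec Y| ≤ 2 * evnorm p * h₁ * (evnorm X * evnorm Y) := by
    refine (abs_dot_le _ _).trans ?_
    have h := (evnorm_mulVec_le A Y).trans (mul_le_mul_of_nonneg_right hA hy)
    have := mul_le_mul_of_nonneg_left h hx
    linarith
  have b2 : |A.mulVec X ⬝ᵥ Y| ≤ 2 * evnorm p * h₁ * (evnorm X * evnorm Y) := by
    refine (abs_dot_le _ _).trans ?_
    have h := (evnorm_mulVec_le A X).trans (mul_le_mul_of_nonneg_right hA hx)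
    have := mul_le_mul_of_nonneg_right h hy
    linarith
  have b3 := mul_le_mul_of_nonneg_left hxy ha
  rw [e]
  simp only [Matrix.smul_mulVec, Matrix.one_mulVec, dotProduct_smul, smul_eq_mul]
  rw [← evnorm_sq' X]
  have c1 := (abs_le.mp b1).1
  have c2 := (abs_le.mp b2).2
  linarith
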